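/- For all natural numbers n and m, f(n,m) = ∑_{i=0}^{n+1} c(n,i)·R(i,m), where R(i,m) denotes the number of surjective functions from Fin i to Fin m. -/

import Mathlib

/-!
Both sides are compared through the binomial transform `u ↦ (x ↦ ∑ m, x.choose m * u m)`, which is
injective because its matrix is unitriangular.

The transform `T n x` of `f n` counts terms of size `n` whose free variables lie in a fixed
`x`-element set. It satisfies `T 0 x = x` and
`T (n + 1) x = T n (x + 1) + ∑ p ≤ n, T p x * T (n - p) x` (`binTr_f_succ`): the abstraction part of
the recursion for `f` is Pascal's rule, and the application part is the fact that pairs of subsets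
are classified by their union (`binTr_cover`), which follows by induction on `x` from a Leibniz rule
for the shift operator (`cover_succ`).

The polynomial `∑ i, c n i * X ^ i` satisfies the same recursion (`ctxPoly_succ`), so its value at
`x` is `T n x`. Classifying functions `Fin i → Fin x` by their image shows that `x ^ i` is the
transform of `R i` (`binTr_R`), so this value is also the transform of `∑ i, c n i * R i m`.
-/

/-- `f n m` counts λ-terms of size `n` with exactly `m` distinct free variables. -/
def f : ℕ → ℕ → ℕ
  | 0, m => if m = 1 then 1 else 0
  | n+1, m => f n m + f n (m+1) +
      ∑ p ∈ (Finset.range (n+1)).attach, ∑ c ∈ Finset.range (m+1),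
        ∑ k ∈ Finset.range (m - c + 1),
          Nat.choose m c * Nat.choose (m - c) k * f p.1 (k + c) * f (n - p.1) (m - k)
termination_by n _ => n
decreasing_by
  · exact Nat.lt_succ_self n
  · exact Nat.lt_succ_self n
  · exact Finset.mem_range.mp p.2
  · exact Nat.lt_succ_of_le (Nat.sub_le n p.1)

/-- `c n i` counts `i`-contexts (closed λ-terms with `i` holes) of size `n`. -/
def c : ℕ → ℕ → ℕ
  | 0, i => if i = 1 then 1 else 0
  | n+1, i => (∑ j ∈ Finset.Icc i (n+1), Nat.choose j i * c n j)
      + ∑ j ∈ Finset.range (i+1), ∑ k ∈ (Finset.range (n+1)).attach,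
          c k.1 j * c (n - k.1) (i - j)
termination_by n _ => n
decreasing_by
  · exact Nat.lt_succ_self n
  · exact Finset.mem_range.mp k.2
  · exact Nat.lt_succ_of_le (Nat.sub_le n k.1)

/-- `R i m` is the number of surjective functions from `Fin i` to `Fin m`. -/
noncomputable def R (i m : ℕ) : ℕ := Nat.card {g : Fin i → Fin m // Function.Surjective g}

/-- The binomial transform: `binTr u x` counts structures on a subset of an `x`-element set, when
`u m` counts those that use exactly `m` given elements. -/
def binTr (u : ℕ → ℕ) (x : ℕ) : ℕ := ∑ m ∈ Finset.range (x + 1), x.choose m * u m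

/-- The product of counting sequences that corresponds to covering an `m`-element set by two
subsets: `q.1` elements lie in both, `r.1` only in the first and `r.2` only in the second. -/
def cover (u v : ℕ → ℕ) (m : ℕ) : ℕ :=
  ∑ q ∈ Finset.HasAntidiagonal.antidiagonal m, m.choose q.1 *
    ∑ r ∈ Finset.HasAntidiagonal.antidiagonal q.2, q.2.choose r.1 * (u (q.1 + r.1) * v (q.1 + r.2))

theorem binom_pascal (g : ℕ → ℕ → ℕ) (n : ℕ) :
    ∑ q ∈ Finset.HasAntidiagonal.antidiagonal (n + 1), (n + 1).choose q.1 * g q.1 q.2 =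
      ∑ q ∈ Finset.HasAntidiagonal.antidiagonal n, n.choose q.1 * (g q.1 (q.2 + 1) + g (q.1 + 1) q.2) := by
  have h := Finset.sum_antidiagonal_choose_succ_nsmul (M := ℕ) g n
  simp only [smul_eq_mul] at h
  rw [h]
  simp only [mul_add, Finset.sum_add_distrib]
  congr 1
  refine Finset.sum_congr rfl fun q hq => ?_
  rw [Nat.choose_symm_of_eq_add (Finset.HasAntidiagonal.mem_antidiagonal.mp hq).symm]

theorem binTr_succ (u : ℕ → ℕ) (x : ℕ) :
    binTr u (x + 1) = binTr (fun m => u m + u (m + 1)) x := by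
  have h := binom_pascal (fun a _ => u a) x
  rw [Finset.Nat.sum_antidiagonal_eq_sum_range_succ_mk,
    Finset.Nat.sum_antidiagonal_eq_sum_range_succ_mk] at h
  exact h

/-- A Leibniz rule for the shift operator: the last element of an `(m + 1)`-element set is covered
by the first set only, by the second only, or by both. -/
theorem cover_succ (u v : ℕ → ℕ) (m : ℕ) :
    cover u v (m + 1) = cover u (fun i => v (i + 1)) m + cover (fun i => u (i + 1)) v m
      + cover (fun i => u (i + 1)) (fun i => v (i + 1)) m := by
  unfold cover
  rw [binom_pascal (fun a b => ∑ r ∈ Finset.HasAntidiagonal.antidiagonal b,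
    b.choose r.1 * (u (a + r.1) * v (a + r.2))), ← Finset.sum_add_distrib,
    ← Finset.sum_add_distrib]
  refine Finset.sum_congr rfl fun q _ => ?_
  rw [binom_pascal (fun k l => u (q.1 + k) * v (q.1 + l))]
  simp only [← mul_add, ← Finset.sum_add_distrib]
  congr 1
  refine Finset.sum_congr rfl fun r _ => ?_
  simp only [← add_assoc, Nat.add_right_comm q.1 1]

theorem cover_add (u u' v v' : ℕ → ℕ) (m : ℕ) :
    cover (fun i => u i + u' i) (fun i => v i + v' i) m
      = cover u v m + cover u v' m + cover u' v m + cover u' v' m := by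
  unfold cover
  simp only [← mul_add, ← Finset.sum_add_distrib]
  refine Finset.sum_congr rfl fun q _ => ?_
  congr 1
  refine Finset.sum_congr rfl fun r _ => ?_
  ring

/-- The binomial transform turns `cover` into the pointwise product: pairs of subsets of an
`x`-element set are classified by their union. -/
theorem binTr_cover (x : ℕ) : ∀ u v : ℕ → ℕ, binTr (cover u v) x = binTr u x * binTr v x := by
  induction x with
  | zero => intro u v; simp [binTr, cover]
  | succ x ih =>
    intro u v
    rw [binTr_succ, binTr_succ u, binTr_succ v, ← ih]
    congr 1
    funext m
    rw [cover_succ, cover_add]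
    ring

theorem binTr_injective (u v : ℕ → ℕ) (h : ∀ x, binTr u x = binTr v x) (m : ℕ) : u m = v m := by
  induction m using Nat.strong_induction_on with
  | _ m ih =>
    have hm := h m
    unfold binTr at hm
    rw [Finset.sum_range_succ, Finset.sum_range_succ,
      Finset.sum_congr rfl fun i hi => by rw [ih i (Finset.mem_range.mp hi)]] at hm
    simpa using hm

theorem binTr_add (u v : ℕ → ℕ) (x : ℕ) :
    binTr (fun m => u m + v m) x = binTr u x + binTr v x := by
  simp [binTr, mul_add, Finset.sum_add_distrib]

theorem binTr_sum {ι : Type*} (s : Finset ι) (u : ι → ℕ → ℕ) (x : ℕ) :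
    binTr (fun m => ∑ i ∈ s, u i m) x = ∑ i ∈ s, binTr (u i) x := by
  simp only [binTr, Finset.mul_sum]
  exact Finset.sum_comm

theorem f_succ (n m : ℕ) : f (n + 1) m =
    f n m + f n (m + 1) + ∑ p ∈ Finset.range (n + 1), cover (f p) (f (n - p)) m := by
  rw [f, Finset.sum_attach (Finset.range (n + 1)) fun p => ∑ c ∈ Finset.range (m+1),
        ∑ k ∈ Finset.range (m - c + 1),
          Nat.choose m c * Nat.choose (m - c) k * f p (k + c) * f (n - p) (m - k)]
  congr 1
  refine Finset.sum_congr rfl fun p _ => ?_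
  unfold cover
  rw [Finset.Nat.sum_antidiagonal_eq_sum_range_succ_mk]
  refine Finset.sum_congr rfl fun c hc => ?_
  rw [Finset.Nat.sum_antidiagonal_eq_sum_range_succ_mk, Finset.mul_sum]
  refine Finset.sum_congr rfl fun k hk => ?_
  rw [Finset.mem_range] at hc hk
  have e : c + (m - c - k) = m - k := by omega
  simp only [e, add_comm k c]
  ring

theorem binTr_f_succ (n x : ℕ) : binTr (f (n + 1)) x =
    binTr (f n) (x + 1) + ∑ p ∈ Finset.range (n + 1), binTr (f p) x * binTr (f (n - p)) x := by
  rw [funext (f_succ n), binTr_add, binTr_sum, binTr_succ]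
  simp only [binTr_cover]

theorem c_succ (n i : ℕ) : c (n + 1) i = (∑ j ∈ Finset.Icc i (n + 1), j.choose i * c n j)
    + ∑ k ∈ Finset.range (n + 1), ∑ q ∈ Finset.HasAntidiagonal.antidiagonal i, c k q.1 * c (n - k) q.2 := by
  rw [c, Finset.sum_congr rfl fun j _ => Finset.sum_attach (Finset.range (n + 1))
    fun k => c k j * c (n - k) (i - j), Finset.sum_comm]
  simp only [Finset.Nat.sum_antidiagonal_eq_sum_range_succ_mk]

theorem c_eq_zero (n : ℕ) : ∀ i, n + 1 < i → c n i = 0 := by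
  induction n using Nat.strong_induction_on with
  | _ n ih =>
    intro i hi
    cases n with
    | zero => rw [c, if_neg (by omega)]
    | succ n =>
      rw [c_succ, Finset.Icc_eq_empty (by omega), Finset.sum_empty, zero_add]
      refine Finset.sum_eq_zero fun k hk => Finset.sum_eq_zero fun q hq => ?_
      rw [Finset.mem_range] at hk
      rw [Finset.HasAntidiagonal.mem_antidiagonal] at hq
      by_cases h : k + 1 < q.1
      · rw [ih k (by omega) _ h, zero_mul]
      · rw [ih (n - k) (by omega) q.2 (by omega), mul_zero]

open Polynomial in
/-- The generating polynomial of contexts of size `n`, by number of holes. -/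
noncomputable def ctxPoly (n : ℕ) : ℕ[X] := ∑ i ∈ Finset.range (n + 2), C (c n i) * X ^ i

theorem coeff_ctxPoly (n i : ℕ) : (ctxPoly n).coeff i = c n i := by
  simp only [ctxPoly, Polynomial.finsetSum_coeff, Polynomial.coeff_C_mul_X_pow]
  rw [Finset.sum_ite_eq]
  split_ifs with h
  · rfl
  · rw [c_eq_zero n i (by rw [Finset.mem_range] at h; omega)]

theorem eval_ctxPoly (n x : ℕ) :
    (ctxPoly n).eval x = ∑ i ∈ Finset.range (n + 2), c n i * x ^ i := by
  simp [ctxPoly, Polynomial.eval_finsetSum]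

open Polynomial in
/-- Abstraction binds an arbitrary subset of the holes, which substitutes `X + 1` for `X`;
application multiplies generating polynomials. -/
theorem ctxPoly_succ (n : ℕ) : ctxPoly (n + 1) =
    (ctxPoly n).comp (X + 1) + ∑ k ∈ Finset.range (n + 1), ctxPoly k * ctxPoly (n - k) := by
  ext i
  rw [coeff_ctxPoly, c_succ, coeff_add, finsetSum_coeff]
  simp only [coeff_mul, coeff_ctxPoly]
  congr 1
  conv_rhs => rw [comp, ctxPoly, eval₂_finsetSum]
  simp only [eval₂_mul, eval₂_C, eval₂_X_pow, finsetSum_coeff, coeff_C_mul,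
    coeff_X_add_one_pow, Nat.cast_id]
  refine Finset.sum_subset_zero_on_sdiff (fun j hj => ?_) (fun j hj => ?_) fun j _ => mul_comm _ _
  · rw [Finset.mem_Icc] at hj
    rw [Finset.mem_range]
    omega
  · rw [Finset.mem_sdiff, Finset.mem_range, Finset.mem_Icc] at hj
    rw [Nat.choose_eq_zero_of_lt (by omega), mul_zero]

theorem binTr_f (n : ℕ) : ∀ x, binTr (f n) x = (ctxPoly n).eval x := by
  induction n using Nat.strong_induction_on with
  | _ n ih =>
    intro x
    cases n with
    | zero =>
      cases x <;> simp [eval_ctxPoly, binTr, f, c]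
    | succ n =>
      rw [binTr_f_succ, ctxPoly_succ, ih n (by omega), Polynomial.eval_add,
        Polynomial.eval_finsetSum]
      simp only [Polynomial.eval_comp, Polynomial.eval_mul, Polynomial.eval_add,
        Polynomial.eval_X, Polynomial.eval_one]
      congr 1
      refine Finset.sum_congr rfl fun p hp => ?_
      rw [Finset.mem_range] at hp
      rw [ih p (by omega), ih (n - p) (by omega)]

theorem card_image_eq (i x : ℕ) (s : Finset (Fin x)) :
    (Finset.univ.filter fun g : Fin i → Fin x => Finset.univ.image g = s).card = R i s.card := by
  classical
  rw [R, ← Fintype.card_subtype, ← Nat.card_eq_fintype_card]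
  refine Nat.card_congr ?_
  refine Equiv.trans (β := {g : Fin i → s // Function.Surjective g}) ?_
    (((Equiv.refl (Fin i)).arrowCongr s.equivFin).subtypeEquiv fun g => ?_)
  · refine ⟨fun g => ⟨fun a => ⟨g.1 a, g.2.subset (Finset.mem_image_of_mem _ (Finset.mem_univ a))⟩, fun b => ?_⟩,
      fun g => ⟨fun a => (g.1 a).1, ?_⟩, fun g => rfl, fun g => rfl⟩
    · have hb : b.1 ∈ Finset.univ.image g.1 := by rw [g.2]; exact b.2
      obtain ⟨a, -, ha⟩ := Finset.mem_image.mp hb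
      exact ⟨a, Subtype.ext ha⟩
    · ext b
      simp only [Finset.mem_image, Finset.mem_univ, true_and]
      constructor
      · rintro ⟨a, rfl⟩
        exact (g.1 a).2
      · intro hb
        obtain ⟨a, ha⟩ := g.2 ⟨b, hb⟩
        exact ⟨a, by rw [ha]⟩
  · simp [Equiv.arrowCongr]

/-- Functions `Fin i → Fin x` are classified by their image. -/
theorem binTr_R (i x : ℕ) : binTr (R i) x = x ^ i := by
  have h := Finset.card_eq_sum_card_fiberwise (s := (Finset.univ : Finset (Fin i → Fin x)))
    (t := (Finset.univ : Finset (Fin x)).powerset) (f := fun g => Finset.univ.image g)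
    (fun g _ => by simp)
  simp only [card_image_eq] at h
  rw [Finset.sum_powerset_apply_card] at h
  simpa [binTr] using h.symm

/-- `f n m = ∑_{i=0}^{n+1} c n i * R i m`. -/
theorem f_eq_sum_c_surj (n m : ℕ) :
    f n m = ∑ i ∈ Finset.range (n+2), c n i * R i m := by
  refine binTr_injective (f n) (fun m => ∑ i ∈ Finset.range (n+2), c n i * R i m) (fun x => ?_) m
  rw [binTr_f, eval_ctxPoly, binTr_sum]
  refine Finset.sum_congr rfl fun i _ => ?_
  rw [← binTr_R]
  simp only [binTr, Finset.mul_sum]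
  exact Finset.sum_congr rfl fun m _ => by ring
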